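/- For every permutation w of {1,…,n} and every δ ∈ GPDs(w), each of the n pipes passes through at least one tile in which it turns from East-bound to North-bound (necessarily a bump tile, via its West-to-North strand, or a NW-elbow tile), and distinct pipes cannot share such a tile. Consequently δ has at least n turn tiles (bump, NW-elbow, or SE-elbow), so (A+B)^n divides wt(δ) in ℤ[x₁,…,xₙ,y₁,…,yₙ,A,B], and (A+B)^n divides the generic pipe dream polynomial G_w. -/

import Mathlib

/-!
A pipe entering row `i` from the West is carried East along the row until it turns North, so if it
does not leave the row through the East boundary, it turns North somewhere in that row. A tile has
only one West-to-North strand, so the `n` pipes turn North in `n` different tiles, each of which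
contributes a factor `A + B` to the weight.
-/

open scoped Classical

namespace GPDpaper

/-- Raw data of a pipe-filling of the `n × n` grid: `d.1 i j` is the (optional) pipe label on
the vertical edge at row `i`, West of column `j` (so `d.1 i 0` is on the West boundary and
`d.1 i (Fin.last n)` on the East boundary); `d.2 i j` is the label on the horizontal edge
North of row `i` in column `j` (so `d.2 0 j` is on the North boundary and
`d.2 (Fin.last n) j` on the South boundary).  Rows are numbered from the top. -/
abbrev Pipes (n : ℕ) :=
  (Fin n → Fin (n+1) → Option (Fin n)) × (Fin (n+1) → Fin n → Option (Fin n))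

variable {n : ℕ}

/-- Label on the West edge of square `(i,j)`. -/
def We (d : Pipes n) (i j : Fin n) : Option (Fin n) := d.1 i j.castSucc
/-- Label on the East edge of square `(i,j)`. -/
def Ea (d : Pipes n) (i j : Fin n) : Option (Fin n) := d.1 i j.succ
/-- Label on the North edge of square `(i,j)`. -/
def No (d : Pipes n) (i j : Fin n) : Option (Fin n) := d.2 i.castSucc j
/-- Label on the South edge of square `(i,j)`. -/
def So (d : Pipes n) (i j : Fin n) : Option (Fin n) := d.2 i.succ j

/-- The local condition making `d` a generic pipe dream: at each square, the pair of labels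
leaving through the East and North edges is either `(W,S)` (cross/horizontal/vertical/blank
tile) or `(S,W)` (bump/elbow/blank tile); moreover two edges of the same square never carry
the same pipe label. -/
def IsValid (d : Pipes n) : Prop :=
  ∀ i j : Fin n,
    ((Ea d i j, No d i j) = (We d i j, So d i j) ∨
     (Ea d i j, No d i j) = (So d i j, We d i j)) ∧
    (We d i j = So d i j → We d i j = none)

/-- The seven generic pipe dream tiles. -/
inductive Tile where
  | cross | bump | nw | se | horiz | vert | blank
deriving DecidableEq

/-- The tile of a pipe-filling at square `(i,j)`. -/
def tile (d : Pipes n) (i j : Fin n) : Tile :=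
  match We d i j, So d i j with
  | some a, some _ => if Ea d i j = some a then .cross else .bump
  | some _, none => if No d i j = none then .horiz else .nw
  | none, some _ => if No d i j = none then .se else .vert
  | none, none => .blank

/-- `d` is a generic pipe dream for the permutation `w`: it is locally valid, the pipe
entering the West boundary in row `i` is labelled `i`, no pipes meet the East and South
boundaries, and the pipe exiting the North boundary in column `j` is labelled `w⁻¹(j)`. -/
def IsGPDof (w : Equiv.Perm (Fin n)) (d : Pipes n) : Prop :=
  IsValid d ∧
  (∀ i : Fin n, d.1 i 0 = some i) ∧
  (∀ i : Fin n, d.1 i (Fin.last n) = none) ∧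
  (∀ j : Fin n, d.2 (Fin.last n) j = none) ∧
  (∀ j : Fin n, d.2 0 j = some (w.symm j))

/-- Number of tiles of `d` of a given type. -/
noncomputable def tileCount (d : Pipes n) (t : Tile) : ℕ :=
  (Finset.univ.filter (fun p : Fin n × Fin n => tile d p.1 p.2 = t)).card

/-- The pipes labelled `p` and `q` cross at the tile `(i,j)`. -/
def CrossesAt (d : Pipes n) (p q : Fin n) (i j : Fin n) : Prop :=
  tile d i j = .cross ∧
  ((We d i j = some p ∧ So d i j = some q) ∨ (We d i j = some q ∧ So d i j = some p))

/-- The number of tiles at which the pipes labelled `p` and `q` cross. -/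
noncomputable def crossCount (d : Pipes n) (p q : Fin n) : ℕ :=
  (Finset.univ.filter (fun ij : Fin n × Fin n => CrossesAt d p q ij.1 ij.2)).card

/-- No two pipes of `d` cross each other at more than one tile. -/
def NoDoubleCross (d : Pipes n) : Prop := ∀ p q : Fin n, crossCount d p q ≤ 1

/-- Number of inversions (Coxeter length) of a permutation. -/
def invCount (w : Equiv.Perm (Fin n)) : ℕ :=
  (Finset.univ.filter (fun p : Fin n × Fin n => p.1 < p.2 ∧ w p.2 < w p.1)).card

/-- Classic pipe dream (in 1-indexed terms: crosses and bumps for `i+j ≤ n`, NW-elbows on the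
antidiagonal `i+j = n+1`, blanks below, and no two pipes crossing twice). -/
def IsClassic (d : Pipes n) : Prop :=
  (∀ i j : Fin n, (i : ℕ) + (j : ℕ) + 2 ≤ n → tile d i j = .cross ∨ tile d i j = .bump) ∧
  (∀ i j : Fin n, (i : ℕ) + (j : ℕ) + 2 = n + 1 → tile d i j = .nw) ∧
  (∀ i j : Fin n, (i : ℕ) + (j : ℕ) + 2 > n + 1 → tile d i j = .blank) ∧
  NoDoubleCross d

/-- Bumpless-reduced: no bump tiles and no two pipes crossing twice. -/
def IsBumplessReduced (d : Pipes n) : Prop :=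
  (∀ i j : Fin n, tile d i j ≠ .bump) ∧ NoDoubleCross d

end GPDpaper

namespace GPDpaper

/-- Variables `x₁,…,xₙ, y₁,…,yₙ, A, B`. -/
inductive Var (n : ℕ) where
  | x (i : Fin n) | y (j : Fin n) | A | B

variable {n : ℕ}

/-- The weight of a generic pipe dream, in `ℤ[x₁,…,xₙ,y₁,…,yₙ,A,B]`. -/
noncomputable def wt (d : Pipes n) : MvPolynomial (Var n) ℤ :=
  ∏ i : Fin n, ∏ j : Fin n,
    match tile d i j with
    | .cross | .horiz | .vert =>
        MvPolynomial.X Var.A + MvPolynomial.X (Var.x i) - MvPolynomial.X (Var.y j)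
    | .blank =>
        MvPolynomial.X Var.B - MvPolynomial.X (Var.x i) + MvPolynomial.X (Var.y j)
    | _ => MvPolynomial.X Var.A + MvPolynomial.X Var.B

/-- The generic pipe dream polynomial `G_w`. -/
noncomputable def G (w : Equiv.Perm (Fin n)) : MvPolynomial (Var n) ℤ :=
  ∑ d ∈ Finset.univ.filter (fun d : Pipes n => IsGPDof w d), wt d

/-- The pipe labelled `p` turns from East-bound to North-bound in square `(i,j)`. Only edge labels
are recorded; for valid `d` this singles out the West-to-North strands of bumps and NW-elbows,
because the two pipes of a tile never carry the same label. -/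
def TurnsNorth (d : Pipes n) (p i j : Fin n) : Prop :=
  We d i j = some p ∧ No d i j = some p

section Turning

variable {d : Pipes n} {p q i j : Fin n}

theorem TurnsNorth.label_unique (hp : TurnsNorth d p i j) (hq : TurnsNorth d q i j) : p = q :=
  Option.some.inj (hp.1.symm.trans hq.1)

theorem TurnsNorth.tile_eq_bump_or_nw (hd : IsValid d) (hp : TurnsNorth d p i j) :
    tile d i j = .bump ∨ tile d i j = .nw := by
  obtain ⟨hWe, hNo⟩ := hp
  obtain ⟨hstrands, hdistinct⟩ := hd i j
  cases hSo : So d i j with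
  | none => simp [tile, hWe, hNo, hSo]
  | some q =>
    have hpq : p ≠ q := by
      rintro rfl
      simpa [hWe] using hdistinct (hWe.trans hSo.symm)
    have hEa : Ea d i j = some q := by
      simpa [hWe, hNo, hSo, hpq] using hstrands
    simp [tile, hWe, hSo, hEa, hpq.symm]

theorem IsValid.east_or_turnsNorth (hd : IsValid d) (hp : We d i j = some p) :
    Ea d i j = some p ∨ TurnsNorth d p i j := by
  rcases (hd i j).1 with h | h
  · exact .inl ((congrArg Prod.fst h).trans hp)
  · exact .inr ⟨hp, (congrArg Prod.snd h).trans hp⟩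

theorem IsValid.exists_turnsNorth (hd : IsValid d) (hWest : d.1 i 0 = some p)
    (hEast : d.1 i (Fin.last n) ≠ some p) : ∃ j, TurnsNorth d p i j := by
  by_contra! noTurn
  have carried (k : Fin (n + 1)) : d.1 i k = some p := by
    induction k using Fin.induction with
    | zero => exact hWest
    | succ j ih => exact (hd.east_or_turnsNorth ih).resolve_right (noTurn j)
  exact hEast (carried (Fin.last n))

theorem IsValid.le_tileCount_bump_add_nw (hd : IsValid d)
    (hturn : ∀ p, ∃ i j, TurnsNorth d p i j) :
    n ≤ tileCount d .bump + tileCount d .nw := by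
  choose row col hturn using hturn
  have hinj : Function.Injective fun p => (row p, col p) := by
    intro p q hpq
    obtain ⟨hrow, hcol⟩ := Prod.mk.inj hpq
    exact (hturn p).label_unique (hrow ▸ hcol ▸ hturn q)
  calc
    n = (Finset.univ : Finset (Fin n)).card := (Finset.card_fin n).symm
    _ ≤ (Finset.univ.filter (fun s : Fin n × Fin n => tile d s.1 s.2 = .bump) ∪
          Finset.univ.filter (fun s : Fin n × Fin n => tile d s.1 s.2 = .nw)).card :=
      Finset.card_le_card_of_injOn _
        (fun p _ => by simpa using (hturn p).tile_eq_bump_or_nw hd) hinj.injOn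
    _ ≤ tileCount d .bump + tileCount d .nw := Finset.card_union_le _ _

end Turning

/-- The squares of `d` holding a turn tile, i.e. a bump or an elbow: those of weight `A + B`. -/
noncomputable def turnSquares (d : Pipes n) : Finset (Fin n × Fin n) :=
  Finset.univ.filter fun s =>
    tile d s.1 s.2 = .bump ∨ tile d s.1 s.2 = .nw ∨ tile d s.1 s.2 = .se

theorem card_turnSquares (d : Pipes n) :
    (turnSquares d).card = tileCount d .bump + tileCount d .nw + tileCount d .se := by
  simp only [turnSquares, tileCount, Finset.filter_or]
  rw [Finset.card_union_of_disjoint, Finset.card_union_of_disjoint, add_assoc] <;>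
    simp +contextual [Finset.disjoint_union_right, Finset.disjoint_filter]

theorem pow_card_turnSquares_dvd_wt (d : Pipes n) :
    (MvPolynomial.X Var.A + MvPolynomial.X Var.B : MvPolynomial (Var n) ℤ) ^ (turnSquares d).card ∣
      wt d := by
  rw [wt, ← Fintype.prod_prod_type']
  refine (Finset.prod_eq_pow_card fun s hs => ?_).symm.dvd.trans
    (Finset.prod_dvd_prod_of_subset _ _ _ (Finset.subset_univ (turnSquares d)))
  rcases (Finset.mem_filter.1 hs).2 with h | h | h <;> simp only [h]

theorem IsGPDof.exists_west_label_and_east_ne {w : Equiv.Perm (Fin n)} {d : Pipes n}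
    (hd : IsGPDof w d) (p : Fin n) : ∃ i, d.1 i 0 = some p ∧ d.1 i (Fin.last n) ≠ some p := by
  obtain ⟨-, hWest, hEast, -, -⟩ := hd
  exact ⟨p, hWest p, by simp [hEast p]⟩

theorem statement8_general {d : Pipes n} (hd : IsValid d)
    (hrow : ∀ p, ∃ i, d.1 i 0 = some p ∧ d.1 i (Fin.last n) ≠ some p) :
    (∀ p, ∃ i j, TurnsNorth d p i j) ∧
    (∀ p q i j, TurnsNorth d p i j → TurnsNorth d q i j → p = q) ∧
    n ≤ tileCount d .bump + tileCount d .nw ∧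
    (MvPolynomial.X Var.A + MvPolynomial.X Var.B : MvPolynomial (Var n) ℤ) ^ n ∣ wt d := by
  have hturn (p : Fin n) : ∃ i j, TurnsNorth d p i j :=
    let ⟨i, hWest, hEast⟩ := hrow p
    ⟨i, hd.exists_turnsNorth hWest hEast⟩
  have hcount := hd.le_tileCount_bump_add_nw hturn
  have hcard : n ≤ (turnSquares d).card :=
    card_turnSquares d ▸ hcount.trans (Nat.le_add_right _ _)
  exact ⟨hturn, fun _ _ _ _ => TurnsNorth.label_unique, hcount,
    (pow_dvd_pow _ hcard).trans (pow_card_turnSquares_dvd_wt d)⟩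

theorem statement8 {n : ℕ} (hn : 1 ≤ n) (w : Equiv.Perm (Fin n)) (d : Pipes n)
    (hd : IsGPDof w d) :
    (∀ p : Fin n, ∃ i j : Fin n, We d i j = some p ∧ No d i j = some p) ∧
    (∀ p q : Fin n, ∀ i j : Fin n,
      (We d i j = some p ∧ No d i j = some p) →
      (We d i j = some q ∧ No d i j = some q) → p = q) ∧
    n ≤ tileCount d .bump + tileCount d .nw + tileCount d .se ∧
    (MvPolynomial.X Var.A + MvPolynomial.X Var.B : MvPolynomial (Var n) ℤ) ^ n ∣ wt d ∧
    (MvPolynomial.X Var.A + MvPolynomial.X Var.B : MvPolynomial (Var n) ℤ) ^ n ∣ G w := by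
  have hgeneral {e : Pipes n} (he : IsGPDof w e) :=
    statement8_general he.1 he.exists_west_label_and_east_ne
  obtain ⟨hturn, hunique, hcount, hdvd⟩ := hgeneral hd
  exact ⟨hturn, hunique, hcount.trans (Nat.le_add_right _ _), hdvd,
    Finset.dvd_sum fun _ he => (hgeneral (Finset.mem_filter.1 he).2).2.2.2⟩

end GPDpaper
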